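/- Let G be a finite group acting linearly on the sphere S^n (n ≥ 1) via an orthogonal representation ρ : G → O(n+1), suppose S^n is G-connected and (S^n)^G ≠ ∅. Then 2 ≤ TC_G(S^n) ≤ 3. -/

import Mathlib

open Set unitInterval

namespace PaperTC

variable {G X : Type*}

/-- The orbit of `x` under the action `act`. -/
def orbit (act : G → X → X) (x : X) : Set X := {y | ∃ g, act g x = y}

/-- The fixed point set of the action `act`. -/
def fixedSet (act : G → X → X) : Set X := {x | ∀ g, act g x = x}

/-- The fixed point set of a subset `S` of the acting group. -/
def fixedSetOf (act : G → X → X) (S : Set G) : Set X := {x | ∀ g ∈ S, act g x = x}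

/-- `minCover P` is the least `k ≥ 1` satisfying `P k`, as an element of `ℕ∞`
(equal to `∞` if there is no such `k`). -/
noncomputable def minCover (P : ℕ → Prop) : ℕ∞ :=
  sInf {k : ℕ∞ | ∃ m : ℕ, k = m ∧ 1 ≤ m ∧ P m}

section Plain

variable (Y : Type*) [TopologicalSpace Y]

/-- `Y × Y` can be covered by `k` open sets each admitting a motion planner. -/
def TCcover (k : ℕ) : Prop :=
  ∃ U : Fin k → Set (Y × Y),
    (∀ i, IsOpen (U i)) ∧ (⋃ i, U i) = univ ∧
    ∀ i, ∃ s : Y × Y → C(I, Y),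
      ContinuousOn s (U i) ∧ ∀ p ∈ U i, s p 0 = p.1 ∧ s p 1 = p.2

/-- Topological complexity (non-reduced, possibly infinite). -/
noncomputable def TC : ℕ∞ := minCover (TCcover Y)

/-- `Y` can be covered by `k` open sets, each of which can be deformed within `Y`
to a point. -/
def catCover (k : ℕ) : Prop :=
  ∃ U : Fin k → Set Y,
    (∀ i, IsOpen (U i)) ∧ (⋃ i, U i) = univ ∧
    ∀ i, ∃ H : Y × I → Y,
      ContinuousOn H (U i ×ˢ (univ : Set I)) ∧ (∀ x ∈ U i, H (x, 0) = x) ∧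
      ∃ y₀, ∀ x ∈ U i, H (x, 1) = y₀

/-- Non-reduced Lusternik–Schnirelmann category. -/
noncomputable def cat : ℕ∞ := minCover (catCover Y)

end Plain

section Equivariant

variable [TopologicalSpace X] (act : G → X → X)

/-- `X × X` can be covered by `k` invariant open sets each admitting an
equivariant motion planner. -/
def eqTCcover (k : ℕ) : Prop :=
  ∃ U : Fin k → Set (X × X),
    (∀ i, IsOpen (U i)) ∧ (⋃ i, U i) = univ ∧
    ∀ i, (∀ g p, p ∈ U i → (act g p.1, act g p.2) ∈ U i) ∧
      ∃ s : X × X → C(I, X),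
        ContinuousOn s (U i) ∧
        (∀ p ∈ U i, s p 0 = p.1 ∧ s p 1 = p.2) ∧
        (∀ g p, p ∈ U i → ∀ t : I, s (act g p.1, act g p.2) t = act g (s p t))

/-- Equivariant topological complexity `TC_G` of Colman and Grant. -/
noncomputable def eqTC : ℕ∞ := minCover (eqTCcover act)

/-- `X × X` can be covered by `k` `(G × G)`-invariant open sets, each admitting a
`(G × G)`-equivariant section of `π^G : P X ×_{X/G} P X → X × X`; such a section is
recorded by a pair of paths `s₁ p`, `s₂ p`, with the orbit of the endpoint of the first
equal to the orbit of the starting point of the second. -/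
def invTCcover (k : ℕ) : Prop :=
  ∃ U : Fin k → Set (X × X),
    (∀ i, IsOpen (U i)) ∧ (⋃ i, U i) = univ ∧
    ∀ i, (∀ g₁ g₂ : G, ∀ p, p ∈ U i → (act g₁ p.1, act g₂ p.2) ∈ U i) ∧
      ∃ s₁ s₂ : X × X → C(I, X),
        ContinuousOn s₁ (U i) ∧ ContinuousOn s₂ (U i) ∧
        (∀ p ∈ U i, s₁ p 0 = p.1 ∧ s₂ p 1 = p.2 ∧
          orbit act (s₁ p 1) = orbit act (s₂ p 0)) ∧
        (∀ g₁ g₂ : G, ∀ p, p ∈ U i → ∀ t : I,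
          s₁ (act g₁ p.1, act g₂ p.2) t = act g₁ (s₁ p t) ∧
          s₂ (act g₁ p.1, act g₂ p.2) t = act g₂ (s₂ p t))

/-- Invariant topological complexity `TC^G` of Lubawski and Marzantowicz. -/
noncomputable def invTC : ℕ∞ := minCover (invTCcover act)

/-- The invariant open set `U` is `G`-compressible into `A`: the inclusion `U ↪ X` is
`G`-equivariantly homotopic to a `G`-map with values in `A`. -/
def GCompressible (A : Set X) (U : Set X) : Prop :=
  (∀ g x, x ∈ U → act g x ∈ U) ∧
  ∃ H : X × I → X,
    ContinuousOn H (U ×ˢ (univ : Set I)) ∧ (∀ x ∈ U, H (x, 0) = x) ∧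
    (∀ g x, x ∈ U → ∀ t : I, H (act g x, t) = act g (H (x, t))) ∧
    (∀ x ∈ U, H (x, 1) ∈ A)

/-- A `G`-categorical set: compressible into a single orbit. -/
def GCategorical (U : Set X) : Prop :=
  ∃ x₀ : X, GCompressible act (orbit act x₀) U

/-- `X` can be covered by `k` open `G`-categorical sets. -/
def catGCover (k : ℕ) : Prop :=
  ∃ U : Fin k → Set X,
    (∀ i, IsOpen (U i)) ∧ (⋃ i, U i) = univ ∧ ∀ i, GCategorical act (U i)

/-- Equivariant Lusternik–Schnirelmann category `cat_G`. -/
noncomputable def catG : ℕ∞ := minCover (catGCover act)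

/-- `X` can be covered by `k` open sets `G`-compressible into `{star}`. -/
def pointedCatGCover (star : X) (k : ℕ) : Prop :=
  ∃ U : Fin k → Set X,
    (∀ i, IsOpen (U i)) ∧ (⋃ i, U i) = univ ∧
    ∀ i, GCompressible act {star} (U i)

/-- The pointed equivariant category `_{{⋆}}cat_G(X)`. -/
noncomputable def pointedCatG (star : X) : ℕ∞ := minCover (pointedCatGCover act star)

/-- `X` is `G`-contractible: the identity is `G`-homotopic to a map with values in a
single orbit. -/
def GContractible : Prop :=
  ∃ H : X × I → X,
    Continuous H ∧ (∀ x, H (x, 0) = x) ∧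
    (∀ g x, ∀ t : I, H (act g x, t) = act g (H (x, t))) ∧
    ∃ x₀ : X, ∀ x, H (x, 1) ∈ orbit act x₀

end Equivariant

/-- The orbit space `X/G` with the quotient topology. -/
abbrev OrbitSpace (act : G → X → X) : Type _ := Quot (fun x y => ∃ g, act g x = y)

end PaperTC
namespace PaperTC

/-- The unit sphere `S^n ⊆ ℝ^{n+1}` (with the Euclidean metric). -/
abbrev Sph (n : ℕ) : Set (EuclideanSpace ℝ (Fin (n + 1))) := Metric.sphere 0 1

/-- The action of `G` on the unit sphere `S^n` obtained by restricting an orthogonal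
representation of `G` on `ℝ^{n+1}`. -/
noncomputable def sphereAct {G : Type*} [Monoid G] {n : ℕ}
    (ρ : G →* (EuclideanSpace ℝ (Fin (n + 1)) ≃ₗᵢ[ℝ] EuclideanSpace ℝ (Fin (n + 1)))) :
    G → ↥(Sph n) → ↥(Sph n) := fun g x =>
  ⟨ρ g x, mem_sphere_zero_iff_norm.mpr (by
    rw [(ρ g).norm_map]; exact mem_sphere_zero_iff_norm.mp x.2)⟩

end PaperTC

open PaperTC


section NoRetract
open MeasureTheory Metric

theorem aux_lip {E : Type*} [NormedAddCommGroup E] [NormedSpace ℝ E]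
    (h : E → E) (K : NNReal) (hK : LipschitzOnWith K h (closedBall 0 1))
    (hz : ∀ x, ‖x‖ = 1 → h x = 0) (g : E → E) (hg1 : ∀ x, ‖x‖ ≤ 1 → g x = h x)
    (hg2 : ∀ x, 1 ≤ ‖x‖ → g x = 0) : LipschitzWith K g := by
  have key : ∀ x y : E, ‖x‖ ≤ 1 → 1 ≤ ‖y‖ → ‖g x - g y‖ ≤ K * ‖x - y‖ := by
    intro x y hx hy
    have hc : ContinuousOn (fun t : ℝ => ‖x + t • (y - x)‖) (Icc 0 1) := by fun_prop
    have := intermediate_value_Icc (zero_le_one) hc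
    obtain ⟨t, ht, hzt⟩ := this (show (1:ℝ) ∈ _ by simp [hx, hy])
    simp only at hzt
    have h1 := lipschitzOnWith_iff_norm_sub_le.1 hK (x := x) (by simpa using hx)
      (y := x + t • (y - x)) (by simp [hzt])
    rw [hz _ hzt] at h1
    rw [hg1 x hx, hg2 y hy]
    refine h1.trans ?_
    gcongr
    have : x - (x + t • (y - x)) = t • (x - y) := by module
    rw [this, norm_smul, Real.norm_eq_abs, abs_of_nonneg ht.1]
    exact mul_le_of_le_one_left (norm_nonneg _) ht.2
  rw [lipschitzWith_iff_norm_sub_le]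
  intro x y
  rcases le_total ‖x‖ 1 with hx | hx <;> rcases le_total ‖y‖ 1 with hy | hy
  · rw [hg1 x hx, hg1 y hy]
    exact lipschitzOnWith_iff_norm_sub_le.1 hK (by simpa using hx) (by simpa using hy)
  · exact key x y hx hy
  · rw [norm_sub_rev, norm_sub_rev x y]; exact key y x hy hx
  · rw [hg2 x hx, hg2 y hy]; simp; positivity

theorem aux_image {E : Type*} [NormedAddCommGroup E] [NormedSpace ℝ E] [CompleteSpace E]
    (g : E → E) (K : NNReal) (hg : LipschitzWith K g) (hg2 : ∀ x, 1 ≤ ‖x‖ → g x = 0)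
    (t : ℝ) (ht : |t| * K < 1) :
    Function.Injective (fun x => x + t • g x) ∧
      (fun x => x + t • g x) '' (ball 0 1) = ball 0 1 := by
  rcases subsingleton_or_nontrivial E with hE | hE
  · exact ⟨fun x y _ => Subsingleton.elim _ _, by
      ext y; simp only [mem_image]
      constructor
      · rintro ⟨x, hx, -⟩; rwa [Subsingleton.elim y x]
      · intro hy; exact ⟨y, hy, Subsingleton.elim _ _⟩⟩
  have happ : ApproximatesLinearOn (fun x => x + t • g x)
      ((ContinuousLinearEquiv.refl ℝ E : E ≃L[ℝ] E) : E →L[ℝ] E) univ (‖t‖₊ * K) := by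
    intro x _ y _
    have : x + t • g x - (y + t • g y) - (x - y) = t • (g x - g y) := by module
    simp only [ContinuousLinearEquiv.coe_coe, ContinuousLinearEquiv.coe_refl', id]
    rw [this, norm_smul]
    push_cast
    rw [mul_assoc]
    gcongr
    exact lipschitzWith_iff_norm_sub_le.1 hg x y
  have hc : Subsingleton E ∨ ‖t‖₊ * K <
      ‖((ContinuousLinearEquiv.refl ℝ E : E ≃L[ℝ] E).symm : E →L[ℝ] E)‖₊⁻¹ := by
    right
    have : ‖((ContinuousLinearEquiv.refl ℝ E : E ≃L[ℝ] E).symm : E →L[ℝ] E)‖₊ = 1 := by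
      have : ((ContinuousLinearEquiv.refl ℝ E : E ≃L[ℝ] E).symm : E →L[ℝ] E) = 
        ContinuousLinearMap.id ℝ E := rfl
      rw [this, ← NNReal.coe_inj]; simp
    rw [this, ← NNReal.coe_lt_coe]; simpa using ht
  have hinj : Function.Injective (fun x => x + t • g x) := by
    have := happ.injOn hc
    exact injOn_univ.1 this
  have hsurj : Function.Surjective (fun x => x + t • g x) := happ.surjective hc
  refine ⟨hinj, ?_⟩
  have hout : ∀ x, 1 ≤ ‖x‖ → x + t • g x = x := fun x hx => by simp [hg2 x hx]
  ext y
  simp only [mem_image, mem_ball_zero_iff]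
  constructor
  · rintro ⟨x, hx, rfl⟩
    by_contra! h
    have := hinj (hout _ h)
    simp only at this
    rw [this] at h
    linarith
  · intro hy
    obtain ⟨x, rfl⟩ := hsurj y
    refine ⟨x, ?_, rfl⟩
    by_contra! h
    simp only [hout x h] at hy
    linarith

theorem aux_det_poly {E : Type*} [NormedAddCommGroup E] [NormedSpace ℝ E]
    [FiniteDimensional ℝ E] (A : E →L[ℝ] E) :
    ∃ p : Polynomial ℝ, p.natDegree ≤ Module.finrank ℝ E ∧ ∀ t : ℝ, p.eval t = (1 + t • A).det := by
  classical
  let b := Module.finBasis ℝ E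
  let M := LinearMap.toMatrix b b (A : _ →ₗ[ℝ] _)
  refine ⟨Matrix.det ((Polynomial.X : Polynomial ℝ) • M.map Polynomial.C +
    (1 : Matrix (Fin (Module.finrank ℝ E)) (Fin (Module.finrank ℝ E)) ℝ).map Polynomial.C), ?_, ?_⟩
  · simpa using Polynomial.natDegree_det_X_add_C_le M 1
  · intro t
    rw [← Polynomial.coe_evalRingHom, RingHom.map_det, ContinuousLinearMap.det, ← LinearMap.det_toMatrix b]
    congr 1
    have : ((1 + t • A : E →L[ℝ] E) : 
      E →ₗ[ℝ] E) = LinearMap.id + t • (A : _ →ₗ[ℝ] _) := rfl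
    rw [this, map_add (LinearMap.toMatrix b b), map_smul (LinearMap.toMatrix b b),
      LinearMap.toMatrix_id]
    ext i j
    by_cases hij : i = j
    · subst hij; simp [M]; ring
    · simp [M, hij]; ring

theorem no_smooth_retract {E : Type*} [NormedAddCommGroup E] [InnerProductSpace ℝ E]
    [FiniteDimensional ℝ E] [MeasurableSpace E] [BorelSpace E]
    (r : E → E)
    (hr : ContDiff ℝ 1 r) (hr1 : ∀ x, ‖r x‖ = 1) (hr2 : ∀ x, ‖x‖ = 1 → r x = x) : False := by
  classical
  let N := Module.finrank ℝ E
  let h : E → E := fun x => r x - x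
  have hh : ContDiff ℝ 1 h := hr.sub contDiff_id
  have hfc : Continuous (fderiv ℝ h) := hh.continuous_fderiv one_ne_zero
  obtain ⟨C, hC⟩ := (isCompact_closedBall (0:E) 1).exists_bound_of_continuousOn hfc.continuousOn
  let K : NNReal := C.toNNReal
  have hK : ∀ x ∈ closedBall (0:E) 1, ‖fderiv ℝ h x‖₊ ≤ K := fun x hx => by
    rw [← NNReal.coe_le_coe]; exact (hC x hx).trans (Real.le_coe_toNNReal C)
  have hlip : LipschitzOnWith K h (closedBall 0 1) :=
    (convex_closedBall (0:E) 1).lipschitzOnWith_of_nnnorm_fderiv_le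
      (fun x _ => (hh.differentiable one_ne_zero) x) hK
  let g : E → E := fun x => if ‖x‖ ≤ 1 then h x else 0
  have hz : ∀ x, ‖x‖ = 1 → h x = 0 := fun x hx => by simp [h, hr2 x hx]
  have hg1 : ∀ x, ‖x‖ ≤ 1 → g x = h x := fun x hx => by simp [g, hx]
  have hg2 : ∀ x, 1 ≤ ‖x‖ → g x = 0 := fun x hx => by
    by_cases h' : ‖x‖ ≤ 1
    · rw [hg1 x h', hz x (le_antisymm h' hx)]
    · simp [g, h']
  have hgl := aux_lip h K hlip hz g hg1 hg2
  have hdetc : Continuous (fun A : E →L[ℝ] E => A.det) := ContinuousLinearMap.continuous_det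
  have hpos : ∃ δ > 0, ∀ A : E →L[ℝ] E, ‖A - 1‖ < δ → 0 < A.det := by
    have : ∀ᶠ A in nhds (1 : E →L[ℝ] E), 0 < A.det := by
      apply hdetc.continuousAt.eventually_const_lt
      have : (1 : E →L[ℝ] E).det = 1 := LinearMap.det_id
      simp only [this]; exact one_pos
    obtain ⟨δ, hδ, H⟩ := Metric.eventually_nhds_iff.1 this
    exact ⟨δ, hδ, fun A hA => H (by rwa [dist_eq_norm])⟩
  obtain ⟨δ, hδ, hpos⟩ := hpos
  let τ : ℝ := min 1 δ / (K + 1)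
  have hτ : 0 < τ := by positivity
  have hτK : τ * K < min 1 δ := by
    have h0 : 0 < min 1 δ := by positivity
    have : τ * (K + 1) = min 1 δ := by simp only [τ]; field_simp
    nlinarith
  -- volume identity
  have hvol : ∀ t : ℝ, 0 < t → t ≤ τ →
      ∫ x in ball (0:E) 1, (1 + t • fderiv ℝ h x).det = (volume (ball (0:E) 1)).toReal := by
    intro t ht0 ht
    have htK : t * K < min 1 δ := lt_of_le_of_lt (by gcongr) hτK
    obtain ⟨hinj, himg⟩ := aux_image g K hgl hg2 t (by
      rw [abs_of_pos ht0]; exact htK.trans_le (min_le_left _ _))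
    have hder : ∀ x ∈ ball (0:E) 1, HasFDerivWithinAt (fun x => x + t • g x)
        (1 + t • fderiv ℝ h x) (ball 0 1) x := by
      intro x hx
      have h1 : HasFDerivAt (fun x => x + t • h x) (1 + t • fderiv ℝ h x) x :=
        (hasFDerivAt_id x).add (((hh.differentiable one_ne_zero) x).hasFDerivAt.const_smul t)
      refine h1.hasFDerivWithinAt.congr (fun y hy => ?_) ?_
      · rw [hg1 y (by simpa using (mem_ball_zero_iff.1 hy).le)]
      · rw [hg1 x (by simpa using (mem_ball_zero_iff.1 hx).le)]
    have hcov := integral_image_eq_integral_abs_det_fderiv_smul volume measurableSet_ball hder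
      hinj.injOn (fun _ => (1:ℝ))
    rw [himg] at hcov
    simp only [integral_const, smul_eq_mul, mul_one, MeasurableSet.univ, measureReal_restrict_apply,
      univ_inter] at hcov
    rw [← Measure.real, hcov]
    apply setIntegral_congr_fun measurableSet_ball
    intro x hx
    have : 0 < (1 + t • fderiv ℝ h x).det := by
      apply hpos
      rw [add_sub_cancel_left, norm_smul, Real.norm_eq_abs, abs_of_pos ht0]
      have := hK x (ball_subset_closedBall hx)
      rw [← NNReal.coe_le_coe] at this
      calc t * ‖fderiv ℝ h x‖ ≤ t * K := by gcongr; exact this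
        _ < _ := htK.trans_le (min_le_right _ _)
    simp only [abs_of_pos this]
  -- interpolation
  let v : ℕ → ℝ := fun i => τ / (i + 1)
  have hv : InjOn v (Finset.range (N+1) : Set ℕ) := by
    intro i _ j _ hij
    simp only [v] at hij
    field_simp at hij
    exact_mod_cast (add_right_cancel hij).symm
  have hv0 : ∀ i, 0 < v i := fun i => by simp only [v]; positivity
  have hvτ : ∀ i, v i ≤ τ := fun i => div_le_self hτ.le (by simp)
  have hdet0 : ∀ x, (1 + (1:ℝ) • fderiv ℝ h x).det = 0 := by
    intro x
    have hfr : 1 + (1:ℝ) • fderiv ℝ h x = fderiv ℝ r x := by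
      have : fderiv ℝ h x = fderiv ℝ r x - 1 := by
        exact ((hr.differentiable one_ne_zero x).hasFDerivAt.sub (hasFDerivAt_id x)).fderiv
      rw [this]; module
    rw [hfr]
    by_contra hne
    have hu : Function.Surjective (fderiv ℝ r x) := by
      have := LinearMap.equivOfDetNeZero (fderiv ℝ r x : E →ₗ[ℝ] E) hne |>.surjective
      exact this
    obtain ⟨w, hw⟩ := hu (r x)
    have hd := (hr.differentiable one_ne_zero x).hasFDerivAt
    have h1 := hd.inner ℝ hd
    have h2 : (fun y => inner ℝ (r y) (r y)) = fun _ => (1:ℝ) := by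
      funext y; simp [hr1]
    rw [h2] at h1
    have h3 := h1.unique (hasFDerivAt_const (1:ℝ) x)
    have h4 := congrArg (fun A => A w) h3
    simp [hw, hr1] at h4
  have hinterp : ∀ x, (1 + (1:ℝ) • fderiv ℝ h x).det =
      ∑ i ∈ Finset.range (N+1), (Lagrange.basis (Finset.range (N+1)) v i).eval 1 *
        (1 + v i • fderiv ℝ h x).det := by
    intro x
    obtain ⟨p, hp, hpe⟩ := aux_det_poly (fderiv ℝ h x)
    have : p = Lagrange.interpolate (Finset.range (N+1)) v fun i => p.eval (v i) := by
      apply Lagrange.eq_interpolate hv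
      refine lt_of_le_of_lt Polynomial.degree_le_natDegree ?_
      simp only [Finset.card_range]
      exact_mod_cast Nat.lt_succ_of_le hp
    rw [← hpe 1]
    conv_lhs => rw [this]
    rw [Lagrange.interpolate_apply, Polynomial.eval_finsetSum]
    refine Finset.sum_congr rfl fun i _ => ?_
    rw [Polynomial.eval_mul, Polynomial.eval_C, hpe, mul_comm]
  have hint : ∀ t : ℝ, IntegrableOn (fun x => (1 + t • fderiv ℝ h x).det) (ball (0:E) 1) := by
    intro t
    have : Continuous (fun x => (1 + t • fderiv ℝ h x).det) := hdetc.comp (by fun_prop)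
    exact (this.continuousOn.integrableOn_compact (isCompact_closedBall (0:E) 1)).mono_set
      ball_subset_closedBall
  have h0 : ∫ x in ball (0:E) 1, (1 + (1:ℝ) • fderiv ℝ h x).det = 0 := by
    simp only [hdet0]; simp
  have h1 : ∫ x in ball (0:E) 1, (1 + (1:ℝ) • fderiv ℝ h x).det =
      (volume (ball (0:E) 1)).toReal := by
    simp only [hinterp]
    rw [integral_finsetSum _ (fun i _ => (hint (v i)).const_mul _)]
    simp only [integral_const_mul]
    rw [Finset.sum_congr rfl fun i _ => by rw [hvol (v i) (hv0 i) (hvτ i)], ← Finset.sum_mul,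
      ← Polynomial.eval_finsetSum, Lagrange.sum_basis hv (by simp)]
    simp
  rw [h0] at h1
  have : 0 < (volume (ball (0:E) 1)).toReal :=
    ENNReal.toReal_pos (measure_ball_pos _ _ one_pos).ne' measure_ball_lt_top.ne
  linarith

end NoRetract

section NoContract
open Metric

open Classical in
noncomputable def nrm {E : Type*} [NormedAddCommGroup E] [NormedSpace ℝ E]
    (x0 : sphere (0:E) 1) (v : E) : sphere (0:E) 1 :=
  if h : v ≠ 0 then ⟨‖v‖⁻¹ • v, by simp [norm_smul, h]⟩ else x0

theorem nrm_val {E : Type*} [NormedAddCommGroup E] [NormedSpace ℝ E]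
    (x0 : sphere (0:E) 1) (v : E) (h : v ≠ 0) : (nrm x0 v : E) = ‖v‖⁻¹ • v := by
  simp [nrm, h]

theorem nrm_unit {E : Type*} [NormedAddCommGroup E] [NormedSpace ℝ E]
    (x0 v : sphere (0:E) 1) : nrm x0 (v : E) = v := by
  have h : ‖(v:E)‖ = 1 := by simp
  have h0 : (v:E) ≠ 0 := by intro h'; simp [h'] at h
  ext1
  rw [nrm_val _ _ h0, h]; simp

theorem nrm_cont {E : Type*} [NormedAddCommGroup E] [NormedSpace ℝ E]
    (x0 : sphere (0:E) 1) (v : E) (h : v ≠ 0) : ContinuousAt (nrm x0) v := by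
  rw [Topology.IsInducing.subtypeVal.continuousAt_iff]
  have h1 : ContinuousAt (fun v : E => ‖v‖⁻¹ • v) v :=
    (continuousAt_id.norm.inv₀ (norm_ne_zero_iff.2 h)).smul continuousAt_id
  refine h1.congr ?_
  filter_upwards [isOpen_ne.mem_nhds h] with w hw
  exact (nrm_val x0 w hw).symm

theorem no_contraction {E : Type*} [NormedAddCommGroup E] [InnerProductSpace ℝ E]
    [FiniteDimensional ℝ E] [MeasurableSpace E] [BorelSpace E] (x0 : sphere (0:E) 1)
    (H : sphere (0:E) 1 × I → sphere (0:E) 1) (hH : Continuous H) (h0 : ∀ x, H (x, 0) = x0)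
    (h1 : ∀ x, H (x, 1) = x) : False := by
  let c : ℝ → I := fun ρ => projIcc 0 1 zero_le_one (4 * ρ - 1)
  have hc : Continuous c := continuous_projIcc.comp (by fun_prop)
  let ψ : E → sphere (0:E) 1 := fun x => H (nrm x0 x, c ‖x‖)
  have hψ : Continuous ψ := by
    rw [continuous_iff_continuousAt]
    intro x
    by_cases hx : x = 0
    · subst hx
      have : ψ =ᶠ[nhds 0] fun _ => x0 := by
        filter_upwards [ball_mem_nhds (0:E) (show (0:ℝ) < 1/4 by norm_num)] with y hy
        rw [mem_ball_zero_iff] at hy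
        have : c ‖y‖ = 0 := projIcc_of_le_left _ (by linarith)
        simp only [ψ, this, h0]
      exact continuousAt_const.congr this.symm
    · exact hH.continuousAt.comp ((nrm_cont x0 x hx).prodMk (hc.comp continuous_norm).continuousAt)
  have hψ1 : ∀ x, 1/2 ≤ ‖x‖ → (ψ x : E) = ‖x‖⁻¹ • x := by
    intro x hx
    have : c ‖x‖ = 1 := projIcc_of_right_le _ (by linarith)
    simp only [ψ, this, h1]
    exact nrm_val _ _ (by rintro rfl; simp at hx; linarith)
  let G : E → E := fun x => max ‖x‖ (1/2) • (ψ x : E) - x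
  have hG : Continuous G := by
    have : Continuous fun x => (ψ x : E) := continuous_subtype_val.comp hψ
    fun_prop
  have hG0 : ∀ x, 1/2 ≤ ‖x‖ → G x = 0 := by
    intro x hx
    have : ‖x‖ ≠ 0 := by linarith
    simp only [G, hψ1 x hx, max_eq_left hx, smul_smul, mul_inv_cancel₀ this, one_smul, sub_self]
  obtain ⟨g, hg, hgG, hgs⟩ := hG.exists_contDiff_approx (ε := fun _ => 1/4) 1 continuous_const
    (fun _ => by norm_num)
  have hg0 : ∀ x, 1/2 ≤ ‖x‖ → g x = 0 := by
    intro x hx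
    by_contra hne
    exact hgs hne (hG0 x hx)
  have hne : ∀ x, x + g x ≠ 0 := by
    intro x hx
    have h2 := hgG x
    rw [dist_eq_norm] at h2
    have h3 : g x - G x = -(max ‖x‖ (1/2) • (ψ x : E)) := by
      rw [eq_neg_of_add_eq_zero_right hx]; simp only [G]; abel
    have h4 : ‖(ψ x : E)‖ = 1 := by simp
    rw [h3, norm_neg, norm_smul, h4, mul_one, Real.norm_eq_abs] at h2
    have := (le_max_right ‖x‖ (1/2)).trans (le_abs_self _)
    linarith
  have hF : ContDiff ℝ 1 fun x => x + g x := contDiff_id.add hg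
  refine no_smooth_retract (fun x => ‖x + g x‖⁻¹ • (x + g x)) ?_ ?_ ?_
  · exact ((hF.norm ℝ hne).inv (fun x => norm_ne_zero_iff.2 (hne x))).smul hF
  · intro x; rw [norm_smul, norm_inv, norm_norm, inv_mul_cancel₀ (norm_ne_zero_iff.2 (hne x))]
  · intro x hx; simp [hg0 x (by rw [hx]; norm_num), hx]

end NoContract
section Upper
open Metric

theorem seg_ne_zero {E : Type*} [NormedAddCommGroup E] [NormedSpace ℝ E] {x y : E}
    (hx : ‖x‖ = 1) (hy : ‖y‖ = 1) (hxy : x ≠ -y) {a b : ℝ} (ha : 0 ≤ a) (hb : 0 ≤ b)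
    (hab : a + b = 1) : a • x + b • y ≠ 0 := by
  intro h
  have h1 : a • x = -(b • y) := eq_neg_of_add_eq_zero_left h
  have h2 := congrArg norm h1
  rw [norm_neg, norm_smul, norm_smul, hx, hy, Real.norm_of_nonneg ha, Real.norm_of_nonneg hb] at h2
  have h3 : a = b := by linarith
  subst h3
  have h4 : a ≠ 0 := by intro h; subst h; norm_num at hab
  apply hxy
  rw [← smul_neg] at h1
  exact smul_right_injective E h4 h1

theorem planner {G : Type*} [Group G] {n : ℕ}
    (ρ : G →* (EuclideanSpace ℝ (Fin (n + 1)) ≃ₗᵢ[ℝ] EuclideanSpace ℝ (Fin (n + 1))))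
    (U : Set (↥(Sph n) × ↥(Sph n)))
    (hinv : ∀ g p, p ∈ U → (sphereAct ρ g p.1, sphereAct ρ g p.2) ∈ U)
    (w : ↥(Sph n) × ↥(Sph n) → I → EuclideanSpace ℝ (Fin (n + 1)))
    (hw : Continuous fun q : (↥(Sph n) × ↥(Sph n)) × I => w q.1 q.2)
    (hne : ∀ p ∈ U, ∀ t, w p t ≠ 0)
    (h0 : ∀ p, w p 0 = p.1) (h1 : ∀ p, w p 1 = p.2)
    (heq : ∀ g p t, w (sphereAct ρ g p.1, sphereAct ρ g p.2) t = ρ g (w p t)) :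
    (∀ g p, p ∈ U → (sphereAct ρ g p.1, sphereAct ρ g p.2) ∈ U) ∧
      ∃ s : ↥(Sph n) × ↥(Sph n) → C(I, ↥(Sph n)),
        ContinuousOn s U ∧
        (∀ p ∈ U, s p 0 = p.1 ∧ s p 1 = p.2) ∧
        (∀ g p, p ∈ U → ∀ t : I,
          s (sphereAct ρ g p.1, sphereAct ρ g p.2) t = sphereAct ρ g (s p t)) := by
  classical
  refine ⟨hinv, ?_⟩
  rcases U.eq_empty_or_nonempty with hU | ⟨q, -⟩
  · subst hU
    exact ⟨fun p => ContinuousMap.const _ p.1, by simp, by simp, by simp⟩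
  let x0 := q.1
  have hcont : Continuous fun q : U × I => nrm x0 (w q.1 q.2) := by
    rw [continuous_iff_continuousAt]
    rintro ⟨p, t⟩
    have h2 : Continuous fun q : U × I => w q.1 q.2 :=
      hw.comp ((continuous_subtype_val.comp continuous_fst).prodMk continuous_snd)
    exact ContinuousAt.comp (f := fun q : U × I => w q.1 q.2) (g := nrm x0)
      (nrm_cont x0 _ (hne p p.2 t)) h2.continuousAt
  let s : ↥(Sph n) × ↥(Sph n) → C(I, ↥(Sph n)) := fun p =>
    if hp : p ∈ U then ⟨fun t => nrm x0 (w p t), hcont.comp (Continuous.prodMk_right (⟨p, hp⟩ : U))⟩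
    else ContinuousMap.const _ p.1
  have hs : ∀ p ∈ U, ∀ t, s p t = nrm x0 (w p t) := by
    intro p hp t
    simp only [s, dif_pos hp]; rfl
  refine ⟨s, ?_, ?_, ?_⟩
  · rw [continuousOn_iff_continuous_domRestrict]
    apply ContinuousMap.continuous_of_continuous_uncurry
    refine hcont.congr ?_
    rintro ⟨p, t⟩
    exact (hs p p.2 t).symm
  · intro p hp
    rw [hs p hp, hs p hp, h0, h1]
    exact ⟨nrm_unit _ _, nrm_unit _ _⟩
  · intro g p hp t
    rw [hs _ (hinv g p hp), hs p hp, heq]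
    apply Subtype.ext
    have hz := hne p hp t
    have hz' : ρ g (w p t) ≠ 0 := by
      intro h; exact hz ((ρ g).map_eq_zero_iff.1 h)
    rw [nrm_val _ _ hz']
    simp only [sphereAct]
    rw [nrm_val _ _ hz, map_smul, (ρ g).norm_map]

theorem act_inj {G : Type*} [Group G] {n : ℕ}
    (ρ : G →* (EuclideanSpace ℝ (Fin (n + 1)) ≃ₗᵢ[ℝ] EuclideanSpace ℝ (Fin (n + 1))))
    (g : G) (x y : ↥(Sph n)) (h : sphereAct ρ g x = -sphereAct ρ g y) : x = -y := by
  have h1 := congrArg Subtype.val h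
  simp only [sphereAct, coe_neg_sphere] at h1
  rw [← map_neg] at h1
  apply Subtype.ext
  rw [coe_neg_sphere]
  exact (ρ g).injective h1

theorem planner_fix {G : Type*} [Group G] {n : ℕ}
    (ρ : G →* (EuclideanSpace ℝ (Fin (n + 1)) ≃ₗᵢ[ℝ] EuclideanSpace ℝ (Fin (n + 1))))
    (e : ↥(Sph n)) (he : e ∈ fixedSet (sphereAct ρ))
    (U : Set (↥(Sph n) × ↥(Sph n))) (hU : U = {p | p.1 ≠ -e ∧ p.2 ≠ -e}) :
    (∀ g p, p ∈ U → (sphereAct ρ g p.1, sphereAct ρ g p.2) ∈ U) ∧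
      ∃ s : ↥(Sph n) × ↥(Sph n) → C(I, ↥(Sph n)),
        ContinuousOn s U ∧
        (∀ p ∈ U, s p 0 = p.1 ∧ s p 1 = p.2) ∧
        (∀ g p, p ∈ U → ∀ t : I,
          s (sphereAct ρ g p.1, sphereAct ρ g p.2) t = sphereAct ρ g (s p t)) := by
  subst hU
  have hu : ∀ x : ↥(Sph n), ‖(x : EuclideanSpace ℝ (Fin (n+1)))‖ = 1 := fun x => by simp
  have hn : ∀ x y : ↥(Sph n), x ≠ -y →
      (x : EuclideanSpace ℝ (Fin (n+1))) ≠ -(y : EuclideanSpace ℝ (Fin (n+1))) := by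
    intro x y h h'
    exact h (Subtype.ext (by rw [h', coe_neg_sphere]))
  apply planner ρ _ _ (fun p t => max (1 - 2 * (t:ℝ)) 0 • (p.1 : EuclideanSpace ℝ (Fin (n+1)))
    + min (2 * (t:ℝ)) (2 - 2 * t) • (e : EuclideanSpace ℝ (Fin (n+1)))
    + max (2 * (t:ℝ) - 1) 0 • (p.2 : EuclideanSpace ℝ (Fin (n+1))))
  · fun_prop
  · rintro p ⟨hp1, hp2⟩ t
    have ht0 := t.2.1
    have ht1 := t.2.2
    rcases le_total (t:ℝ) (1/2) with ht | ht
    · rw [max_eq_left (by linarith), min_eq_left (by linarith), max_eq_right (by linarith),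
        zero_smul, add_zero]
      exact seg_ne_zero (hu _) (hu _) (hn _ _ hp1) (by linarith) (by linarith) (by ring)
    · rw [max_eq_right (by linarith), min_eq_right (by linarith), max_eq_left (by linarith),
        zero_smul, zero_add, add_comm (_ • _) (_ • _)]
      exact seg_ne_zero (hu _) (hu _) (hn _ _ hp2) (by linarith) (by linarith) (by ring)
  · intro p; simp
  · intro p; norm_num
  · intro g p t
    have := congrArg Subtype.val (he g)
    simp only [sphereAct] at this ⊢
    simp only [map_add, map_smul, this]
  · rintro g p ⟨hp1, hp2⟩
    refine ⟨fun h => hp1 ?_, fun h => hp2 ?_⟩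
    · apply act_inj ρ g; rw [he g]; exact h
    · apply act_inj ρ g; rw [he g]; exact h

theorem planner_geo {G : Type*} [Group G] {n : ℕ}
    (ρ : G →* (EuclideanSpace ℝ (Fin (n + 1)) ≃ₗᵢ[ℝ] EuclideanSpace ℝ (Fin (n + 1))))
    (U : Set (↥(Sph n) × ↥(Sph n))) (hU : U = {p | p.1 ≠ -p.2}) :
    (∀ g p, p ∈ U → (sphereAct ρ g p.1, sphereAct ρ g p.2) ∈ U) ∧
      ∃ s : ↥(Sph n) × ↥(Sph n) → C(I, ↥(Sph n)),
        ContinuousOn s U ∧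
        (∀ p ∈ U, s p 0 = p.1 ∧ s p 1 = p.2) ∧
        (∀ g p, p ∈ U → ∀ t : I,
          s (sphereAct ρ g p.1, sphereAct ρ g p.2) t = sphereAct ρ g (s p t)) := by
  subst hU
  have hu : ∀ x : ↥(Sph n), ‖(x : EuclideanSpace ℝ (Fin (n+1)))‖ = 1 := fun x => by simp
  have hn : ∀ x y : ↥(Sph n), x ≠ -y →
      (x : EuclideanSpace ℝ (Fin (n+1))) ≠ -(y : EuclideanSpace ℝ (Fin (n+1))) := by
    intro x y h h'
    exact h (Subtype.ext (by rw [h', coe_neg_sphere]))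
  apply planner ρ _ _ (fun p t => (1 - (t:ℝ)) • (p.1 : EuclideanSpace ℝ (Fin (n+1)))
    + (t:ℝ) • (p.2 : EuclideanSpace ℝ (Fin (n+1))))
  · fun_prop
  · intro p hp t
    have ht0 := t.2.1
    have ht1 := t.2.2
    exact seg_ne_zero (hu _) (hu _) (hn _ _ hp) (by linarith) (by linarith) (by ring)
  · intro p; simp
  · intro p; simp
  · intro g p t
    simp only [sphereAct, map_add, map_smul]
  · intro g p hp h
    exact hp (act_inj ρ g _ _ h)

end Upper

/-- If a finite group `G` acts linearly on a `G`-connected sphere `S^n` with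
non-empty fixed point set, then `2 ≤ TC_G(S^n) ≤ 3`. -/
theorem eqTC_linear_sphere_between_two_and_three {G : Type*} [Group G] [Finite G]
    (n : ℕ) (hn : 1 ≤ n)
    (ρ : G →* (EuclideanSpace ℝ (Fin (n + 1)) ≃ₗᵢ[ℝ] EuclideanSpace ℝ (Fin (n + 1))))
    (hconn : ∀ H : Subgroup G, IsPathConnected (fixedSetOf (sphereAct ρ) (H : Set G)))
    (hfix : (fixedSet (sphereAct ρ)).Nonempty) :
    2 ≤ eqTC (sphereAct ρ) ∧ eqTC (sphereAct ρ) ≤ 3 := by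
    classical
  obtain ⟨e, he⟩ := hfix
  have hfs : fixedSetOf (sphereAct ρ) ((⊤ : Subgroup G) : Set G) = fixedSet (sphereAct ρ) := by
    ext x; simp [fixedSetOf, fixedSet]
  have hpc := hconn ⊤
  rw [hfs] at hpc
  have hne : e ≠ -e := by
    intro h
    have h1 := congrArg Subtype.val h
    rw [coe_neg_sphere] at h1
    have h2 : ‖(e : EuclideanSpace ℝ (Fin (n+1)))‖ = 1 := by simp
    have h3 : (2:ℝ) • (e : EuclideanSpace ℝ (Fin (n+1))) = 0 := by
      rw [two_smul]; nth_rewrite 2 [h1]; exact add_neg_cancel _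
    rw [(smul_eq_zero.1 h3).resolve_left two_ne_zero] at h2
    simp at h2
  have hneg : -e ∈ fixedSet (sphereAct ρ) := by
    intro g
    apply Subtype.ext
    have := congrArg Subtype.val (he g)
    simp only [sphereAct] at this ⊢
    rw [coe_neg_sphere, map_neg, this]
  obtain ⟨f, hf, hfe, hfe'⟩ : ∃ f ∈ fixedSet (sphereAct ρ), f ≠ e ∧ f ≠ -e := by
    by_contra! hcon
    have hfin : (fixedSet (sphereAct ρ)).Finite := by
      apply (Set.toFinite ({e, -e} : Set ↥(Sph n))).subset
      intro x hx
      by_cases h : x = e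
      · simp [h]
      · simp [hcon x hx h]
    have hinf := hpc.isConnected.isPreconnected.infinite_of_nontrivial ⟨e, he, -e, hneg, hne⟩
    exact hinf hfin
  constructor
  · apply le_sInf
    rintro k ⟨m, rfl, hm, U, hUo, hUc, hUs⟩
    by_contra hlt
    have hm1 : m = 1 := by
      have : m < 2 := by
        by_contra h
        exact hlt (by exact_mod_cast not_lt.1 h)
      omega
    subst hm1
    have hU0 : U 0 = univ := by
      rw [← hUc]; ext x; simp
    obtain ⟨-, s, hs, hse, -⟩ := hUs 0
    rw [hU0] at hs hse
    rw [continuousOn_univ] at hs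
    refine no_contraction e (fun q => s (e, q.1) q.2) ?_ (fun x => (hse _ (mem_univ _)).1)
      (fun x => (hse _ (mem_univ _)).2)
    fun_prop
  · apply sInf_le
    refine ⟨3, rfl, by norm_num, ![{p | p.1 ≠ -p.2}, {p | p.1 ≠ -e ∧ p.2 ≠ -e},
      {p | p.1 ≠ -f ∧ p.2 ≠ -f}], ?_, ?_, ?_⟩
    · have hfp : ∀ e : ↥(Sph n), IsOpen {p : ↥(Sph n) × ↥(Sph n) | p.1 ≠ -e ∧ p.2 ≠ -e} :=
        fun e => (isOpen_ne_fun continuous_fst continuous_const).inter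
          (isOpen_ne_fun continuous_snd continuous_const)
      intro i
      fin_cases i
      · exact isOpen_ne_fun continuous_fst continuous_snd.neg
      · exact hfp e
      · exact hfp f
    · rw [eq_univ_iff_forall]
      rintro ⟨x, y⟩
      by_contra hcon
      simp only [mem_iUnion, not_exists] at hcon
      have c0 : ¬ (x ≠ -y) := hcon 0
      have c1 : ¬ (x ≠ -e ∧ y ≠ -e) := hcon 1
      have c2 : ¬ (x ≠ -f ∧ y ≠ -f) := hcon 2
      push Not at c0
      subst c0
      by_cases h1 : -y = -e
      · have h1' := neg_injective h1
        subst h1'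
        by_cases h2 : -y = -f
        · exact hfe (neg_injective h2).symm
        · have : y = -f := by by_contra h; exact c2 ⟨h2, h⟩
          exact hfe' (by rw [this, neg_neg])
      · have h3 : y = -e := by by_contra h; exact c1 ⟨h1, h⟩
        subst h3
        by_cases h2 : - -e = -f
        · exact hfe' (by rw [← neg_neg f, ← h2, neg_neg])
        · have : -e = -f := by by_contra h; exact c2 ⟨h2, h⟩
          exact hfe (neg_injective this).symm
    · intro i
      fin_cases i
      · exact planner_geo ρ _ rfl
      · exact planner_fix ρ e he _ rfl
      · exact planner_fix ρ f hf _ rfl
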